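/- Let a₀, a₁ ∈ ℝ and a₂ > 0. Then conv({(x,y) ∈ [0,1]² : y ≤ a₀ + a₁x + a₂x²}) is a polytope; that is, there exists a finite set F ⊆ ℝ² such that this convex hull equals conv(F). -/

import Mathlib

/-!
Over a segment, the part of the hypograph of a convex function lying above a level `c` fits under
the chord, so its convex hull is the trapezoid spanned by its corners as soon as both end values
are at least `c`. Capping the function at a level `d` destroys convexity, but a convex function
crosses a level at most once on either side of a point where it is below that level. Finitely many
cuts at crossings therefore leave pieces on which the capped function is convex (either constantly
`d` or equal to the original function) and which are empty or end at values `≥ c`, and a finite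
union of sets with polytopal hulls has a polytopal hull.
-/

open Set

/-- The convex hull of `S` is a polytope, given as the hull of a finite set of points. -/
def HasPolytopeHull {E : Type*} [AddCommGroup E] [Module ℝ E] (S : Set E) : Prop :=
  ∃ F : Finset E, convexHull ℝ S = convexHull ℝ (F : Set E)

/-- The part of the hypograph of `f` over `s` that lies on or above the level `c`. It has no point
over any `x` with `f x < c`. -/
def truncatedHypograph {E : Type*} (f : E → ℝ) (c : ℝ) (s : Set E) : Set (E × ℝ) :=
  {p | p.1 ∈ s ∧ p.2 ∈ Icc c (f p.1)}

section PolytopeHull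

variable {E : Type*} [AddCommGroup E] [Module ℝ E] {S T : Set E}

lemma hasPolytopeHull_empty : HasPolytopeHull (∅ : Set E) :=
  ⟨∅, by rw [Finset.coe_empty]⟩

lemma HasPolytopeHull.union (hS : HasPolytopeHull S) (hT : HasPolytopeHull T) :
    HasPolytopeHull (S ∪ T) := by
  classical
  obtain ⟨F, hF⟩ := hS
  obtain ⟨G, hG⟩ := hT
  refine ⟨F ∪ G, ?_⟩
  rw [Finset.coe_union, ← convexHull_convexHull_union_left, ← convexHull_convexHull_union_right,
    hF, hG, convexHull_convexHull_union_right, convexHull_convexHull_union_left]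

end PolytopeHull

section TruncatedHypograph

variable {E : Type*} {f g : E → ℝ} {c : ℝ} {s t : Set E}

lemma truncatedHypograph_union :
    truncatedHypograph f c (s ∪ t) = truncatedHypograph f c s ∪ truncatedHypograph f c t := by
  ext p
  exact or_and_right

lemma truncatedHypograph_congr (h : EqOn f g s) :
    truncatedHypograph f c s = truncatedHypograph g c s := by
  ext p
  exact and_congr_right fun hp ↦ by rw [h hp]

lemma truncatedHypograph_eq_empty (h : ∀ x ∈ s, f x < c) : truncatedHypograph f c s = ∅ :=
  eq_empty_of_forall_notMem fun p hp ↦ (h p.1 hp.1).not_ge (hp.2.1.trans hp.2.2)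

end TruncatedHypograph

section Trapezoid

variable {E : Type*} [AddCommGroup E] [Module ℝ E] {f : E → ℝ} {c : ℝ} {u v : E}

lemma truncatedHypograph_segment_subset_convexHull (hf : ConvexOn ℝ (segment ℝ u v) f) :
    truncatedHypograph f c (segment ℝ u v) ⊆
      convexHull ℝ {(u, c), (u, f u), (v, c), (v, f v)} := by
  set K := convexHull ℝ ({(u, c), (u, f u), (v, c), (v, f v)} : Set (E × ℝ))
  have hK : Convex ℝ K := convex_convexHull ℝ _
  have corner_mem : {(u, c), (u, f u), (v, c), (v, f v)} ⊆ K := subset_convexHull ℝ _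
  rintro ⟨x, y⟩ ⟨⟨s, t, hs, ht, hst, rfl⟩, hcy, hyf⟩
  have base_mem : (s • u + t • v, c) ∈ K := by
    have := hK (corner_mem (by simp : (u, c) ∈ _)) (corner_mem (by simp : (v, c) ∈ _)) hs ht hst
    rwa [Prod.smul_mk, Prod.smul_mk, Prod.mk_add_mk, Convex.combo_self hst] at this
  have chord_mem : (s • u + t • v, s • f u + t • f v) ∈ K :=
    hK (corner_mem (by simp : (u, f u) ∈ _)) (corner_mem (by simp : (v, f v) ∈ _)) hs ht hst
  have below_chord : y ≤ s • f u + t • f v :=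
    hyf.trans (hf.2 (left_mem_segment ℝ u v) (right_mem_segment ℝ u v) hs ht hst)
  apply hK.segment_subset base_mem chord_mem
  rw [← Prod.image_mk_segment_right, segment_eq_Icc (hcy.trans below_chord)]
  exact mem_image_of_mem _ ⟨hcy, below_chord⟩

lemma hasPolytopeHull_truncatedHypograph_segment (hf : ConvexOn ℝ (segment ℝ u v) f)
    (hu : c ≤ f u) (hv : c ≤ f v) :
    HasPolytopeHull (truncatedHypograph f c (segment ℝ u v)) := by
  classical
  refine ⟨{(u, c), (u, f u), (v, c), (v, f v)}, ?_⟩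
  push_cast
  refine (convexHull_min (truncatedHypograph_segment_subset_convexHull hf)
    (convex_convexHull ℝ _)).antisymm (convexHull_mono ?_)
  simp [insert_subset_iff, truncatedHypograph, left_mem_segment, right_mem_segment, hu, hv]

end Trapezoid

lemma uIcc_union_uIcc_of_mem {α : Type*} [LinearOrder α] {a b z : α} (hz : z ∈ uIcc a b) :
    uIcc a z ∪ uIcc z b = uIcc a b :=
  (union_subset (uIcc_subset_uIcc_left hz) (uIcc_subset_uIcc_right hz)).antisymm
    uIcc_subset_uIcc_union_uIcc

section Interval

variable {f : ℝ → ℝ} {a b c d : ℝ}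

lemma exists_level_crossing (hf : ConvexOn ℝ (uIcc a b) f) (hcont : ContinuousOn f (uIcc a b))
    (ha : f a < c) (hb : c ≤ f b) :
    ∃ z ∈ uIcc a b, f z = c ∧ (∀ x ∈ uIcc a z, x ≠ z → f x < c) ∧ ∀ x ∈ uIcc z b, c ≤ f x := by
  obtain ⟨z, hz, rfl⟩ := intermediate_value_uIcc hcont (mem_uIcc_of_le ha.le hb)
  refine ⟨z, hz, rfl, fun x hx hxz ↦ ?_, fun x hx ↦ ?_⟩
  · rcases lt_or_ge (f a) (f x) with hax | hxa
    · have hxo : x ∈ openSegment ℝ a z :=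
        mem_openSegment_of_ne_left_right (fun h ↦ hax.ne (congrArg f h)) hxz.symm
          (segment_eq_uIcc a z ▸ hx)
      exact hf.lt_right_of_left_lt left_mem_uIcc hz hxo hax
    · exact hxa.trans_lt ha
  · by_contra! hxz
    have hz_between : z ∈ segment ℝ a x := by
      rw [segment_eq_uIcc]
      grind [mem_uIcc]
    exact lt_irrefl (f z) ((hf.convex_lt (f z)).segment_subset ⟨left_mem_uIcc, ha⟩
      ⟨uIcc_subset_uIcc_right hz hx, hxz⟩ hz_between).2

lemma hasPolytopeHull_truncatedHypograph_of_lt_of_le (hf : ConvexOn ℝ (uIcc a b) f)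
    (hcont : ContinuousOn f (uIcc a b)) (ha : f a < c) (hb : c ≤ f b) :
    HasPolytopeHull (truncatedHypograph f c (uIcc a b)) := by
  obtain ⟨z, hz, hfz, hlt, -⟩ := exists_level_crossing hf hcont ha hb
  have cut : uIcc a b = (uIcc a z \ {z}) ∪ uIcc z b := by
    rw [← uIcc_union_uIcc_of_mem hz]
    ext x
    by_cases hx : x = z <;> simp [hx]
  have left_empty : truncatedHypograph f c (uIcc a z \ {z}) = ∅ :=
    truncatedHypograph_eq_empty fun x hx ↦ hlt x hx.1 hx.2
  rw [cut, truncatedHypograph_union, left_empty, empty_union, ← segment_eq_uIcc]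
  refine hasPolytopeHull_truncatedHypograph_segment ?_ hfz.ge hb
  exact hf.subset (segment_eq_uIcc z b ▸ uIcc_subset_uIcc_right hz) (convex_segment z b)

lemma hasPolytopeHull_truncatedHypograph (hf : ConvexOn ℝ (uIcc a b) f)
    (hcont : ContinuousOn f (uIcc a b)) :
    HasPolytopeHull (truncatedHypograph f c (uIcc a b)) := by
  rcases lt_or_ge (f a) c with ha | ha <;> rcases lt_or_ge (f b) c with hb | hb
  · have below : uIcc a b ⊆ {x ∈ uIcc a b | f x < c} := by
      simpa only [segment_eq_uIcc] using
        (hf.convex_lt c).segment_subset ⟨left_mem_uIcc, ha⟩ ⟨right_mem_uIcc, hb⟩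
    rw [truncatedHypograph_eq_empty fun x hx ↦ (below hx).2]
    exact hasPolytopeHull_empty
  · exact hasPolytopeHull_truncatedHypograph_of_lt_of_le hf hcont ha hb
  · rw [uIcc_comm] at hf hcont ⊢
    exact hasPolytopeHull_truncatedHypograph_of_lt_of_le hf hcont hb ha
  · rw [← segment_eq_uIcc] at hf ⊢
    exact hasPolytopeHull_truncatedHypograph_segment hf ha hb

lemma hasPolytopeHull_truncatedHypograph_min_of_forall_le (hf : ConvexOn ℝ (uIcc a b) f)
    (hcont : ContinuousOn f (uIcc a b)) (hle : ∀ x ∈ uIcc a b, f x ≤ d) :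
    HasPolytopeHull (truncatedHypograph (fun x ↦ min d (f x)) c (uIcc a b)) := by
  rw [truncatedHypograph_congr fun x hx ↦ min_eq_right (hle x hx)]
  exact hasPolytopeHull_truncatedHypograph hf hcont

lemma hasPolytopeHull_truncatedHypograph_min_of_forall_ge (hge : ∀ x ∈ uIcc a b, d ≤ f x) :
    HasPolytopeHull (truncatedHypograph (fun x ↦ min d (f x)) c (uIcc a b)) := by
  rw [truncatedHypograph_congr fun x hx ↦ min_eq_left (hge x hx)]
  exact hasPolytopeHull_truncatedHypograph (convexOn_const d (convex_uIcc a b)) continuousOn_const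

lemma hasPolytopeHull_truncatedHypograph_min_of_left_lt (hf : ConvexOn ℝ (uIcc a b) f)
    (hcont : ContinuousOn f (uIcc a b)) (ha : f a < d) :
    HasPolytopeHull (truncatedHypograph (fun x ↦ min d (f x)) c (uIcc a b)) := by
  rcases lt_or_ge (f b) d with hb | hb
  · refine hasPolytopeHull_truncatedHypograph_min_of_forall_le hf hcont fun x hx ↦ ?_
    exact (hf.le_max_of_mem_segment left_mem_uIcc right_mem_uIcc
      (segment_eq_uIcc a b ▸ hx)).trans (max_le ha.le hb.le)
  · obtain ⟨z, hz, hfz, hlt, hge⟩ := exists_level_crossing hf hcont ha hb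
    have haz : uIcc a z ⊆ uIcc a b := uIcc_subset_uIcc_left hz
    have hle : ∀ x ∈ uIcc a z, f x ≤ d := fun x hx ↦ by
      rcases eq_or_ne x z with rfl | hxz
      exacts [hfz.le, (hlt x hx hxz).le]
    rw [← uIcc_union_uIcc_of_mem hz, truncatedHypograph_union]
    exact (hasPolytopeHull_truncatedHypograph_min_of_forall_le
      (hf.subset haz (convex_uIcc a z)) (hcont.mono haz) hle).union
      (hasPolytopeHull_truncatedHypograph_min_of_forall_ge hge)

lemma hasPolytopeHull_truncatedHypograph_min (hf : ConvexOn ℝ (uIcc a b) f)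
    (hcont : ContinuousOn f (uIcc a b)) :
    HasPolytopeHull (truncatedHypograph (fun x ↦ min d (f x)) c (uIcc a b)) := by
  by_cases hge : ∀ x ∈ uIcc a b, d ≤ f x
  · exact hasPolytopeHull_truncatedHypograph_min_of_forall_ge hge
  · push Not at hge
    obtain ⟨m, hm, hfm⟩ := hge
    have hma : uIcc m a ⊆ uIcc a b := uIcc_comm a m ▸ uIcc_subset_uIcc_left hm
    have hmb : uIcc m b ⊆ uIcc a b := uIcc_subset_uIcc_right hm
    rw [← uIcc_union_uIcc_of_mem hm, uIcc_comm a m, truncatedHypograph_union]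
    exact (hasPolytopeHull_truncatedHypograph_min_of_left_lt
      (hf.subset hma (convex_uIcc m a)) (hcont.mono hma) hfm).union
      (hasPolytopeHull_truncatedHypograph_min_of_left_lt
        (hf.subset hmb (convex_uIcc m b)) (hcont.mono hmb) hfm)

end Interval

lemma convexOn_quadratic (a₀ a₁ : ℝ) {a₂ : ℝ} (ha₂ : 0 ≤ a₂) :
    ConvexOn ℝ univ fun x : ℝ ↦ a₀ + a₁ * x + a₂ * x ^ 2 :=
  ((convexOn_const a₀ convex_univ).add ((LinearMap.mul ℝ ℝ a₁).convexOn convex_univ)).add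
    (even_two.convexOn_pow.smul ha₂)

theorem convexHull_below_parabola_is_polytope_general {q : ℝ → ℝ} {a b : ℝ} (c d : ℝ)
    (hq : ConvexOn ℝ (Icc a b) q) (hcont : ContinuousOn q (Icc a b)) :
    ∃ F : Finset (ℝ × ℝ),
      convexHull ℝ {p : ℝ × ℝ | p.1 ∈ Icc a b ∧ p.2 ∈ Icc c d ∧ p.2 ≤ q p.1} =
        convexHull ℝ (F : Set (ℝ × ℝ)) := by
  have capped : {p : ℝ × ℝ | p.1 ∈ Icc a b ∧ p.2 ∈ Icc c d ∧ p.2 ≤ q p.1} =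
      truncatedHypograph (fun x ↦ min d (q x)) c (Icc a b) := by
    ext p
    simp only [truncatedHypograph, mem_ofPred_eq, mem_Icc, le_min_iff, and_assoc]
  rw [capped]
  rcases le_or_gt a b with hab | hba
  · rw [← uIcc_of_le hab] at hq hcont ⊢
    exact hasPolytopeHull_truncatedHypograph_min hq hcont
  · rw [truncatedHypograph_eq_empty (by simp [Icc_eq_empty_of_lt hba])]
    exact hasPolytopeHull_empty

/-- For `a₀, a₁ ∈ ℝ` and `a₂ > 0`,
`conv {(x,y) ∈ [0,1]² : y ≤ a₀ + a₁x + a₂x²}` is a polytope. -/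
theorem convexHull_below_parabola_is_polytope (a₀ a₁ a₂ : ℝ) (ha₂ : 0 < a₂) :
    ∃ F : Finset (ℝ × ℝ),
      convexHull ℝ {p : ℝ × ℝ | p.1 ∈ Set.Icc (0:ℝ) 1 ∧ p.2 ∈ Set.Icc (0:ℝ) 1 ∧
          p.2 ≤ a₀ + a₁ * p.1 + a₂ * p.1 ^ 2} =
        convexHull ℝ (↑F : Set (ℝ × ℝ)) :=
  convexHull_below_parabola_is_polytope_general 0 1
    ((convexOn_quadratic a₀ a₁ ha₂.le).subset (subset_univ _) (convex_Icc 0 1)) (by fun_prop)
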